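/- For every φ ∈ X, ∫_{ℝ³} det(P, ∇φ) dx = 0, where P = (0,0,0,1) is the north pole of S³. Consequently, ∫_{ℝ³} det(φ − P, ∇φ) dx = ∫_{ℝ³} det(φ, ∇φ) dx = 2π² d(φ). -/

import Mathlib

/- Common setting: Skyrme maps φ : ℝ³ → S³ ⊂ ℝ⁴ with weak partial derivatives. -/

open MeasureTheory Real Filter
open scoped Topology ENNReal BigOperators

noncomputable section

abbrev R3 : Type := Fin 3 → ℝ
abbrev R4 : Type := Fin 4 → ℝ

/-- Euclidean dot product on ℝ⁴. -/
def dot (u v : R4) : ℝ := ∑ a, u a * v a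

/-- Squared Euclidean norm on ℝ⁴. -/
def nsq (u : R4) : ℝ := dot u u

/-- |u∧v|² = |u|²|v|² − ⟨u,v⟩². -/
def wedgeSq (u v : R4) : ℝ := nsq u * nsq v - (dot u v) ^ 2

/-- Gram determinant of three vectors of ℝ⁴. -/
def gram (u v w : R4) : ℝ :=
  Matrix.det !![dot u u, dot u v, dot u w; dot v u, dot v v, dot v w; dot w u, dot w v, dot w w]

/-- Determinant of the 4×4 matrix with columns a, b, c, d. -/
def det4 (a b c d : R4) : ℝ := Matrix.det (Matrix.of fun i j => ![a, b, c, d] j i)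

/-- Smooth compactly supported test functions on ℝ³. -/
def IsTestFun {E : Type*} [NormedAddCommGroup E] [NormedSpace ℝ E] (ψ : R3 → E) : Prop :=
  ContDiff ℝ (⊤ : ℕ∞) ψ ∧ HasCompactSupport ψ

/-- A weakly differentiable map φ : ℝ³ → S³ ⊂ ℝ⁴ together with its weak
partial derivatives `pderiv i = ∂ᵢφ`. -/
structure SkyrmeMap where
  toFun : R3 → R4
  pderiv : Fin 3 → R3 → R4
  meas : Measurable toFun
  pderiv_locInt : ∀ i, LocallyIntegrable (pderiv i) volume
  sphere : ∀ᵐ x : R3, nsq (toFun x) = 1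
  weak : ∀ (i : Fin 3) (a : Fin 4) (ψ : R3 → ℝ), IsTestFun ψ →
    ∫ x : R3, fderiv ℝ ψ x (Pi.single i 1) * toFun x a
      = - ∫ x : R3, ψ x * pderiv i x a

/-- |∇φ|² = Σᵢ |∂ᵢφ|². -/
def gradSq (φ : SkyrmeMap) (x : R3) : ℝ := ∑ i, nsq (φ.pderiv i x)

/-- |A(φ)|² = Σᵢⱼ |∂ᵢφ∧∂ⱼφ|². -/
def ASq (φ : SkyrmeMap) (x : R3) : ℝ := ∑ i, ∑ j, wedgeSq (φ.pderiv i x) (φ.pderiv j x)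

/-- The Skyrme energy density |∇φ|² + |A(φ)|². -/
def energyDensity (φ : SkyrmeMap) (x : R3) : ℝ := gradSq φ x + ASq φ x

/-- φ ∈ X : finite Skyrme energy. -/
def memX (φ : SkyrmeMap) : Prop := Integrable (energyDensity φ) volume

/-- The Skyrme energy ℰ(φ). -/
def energy (φ : SkyrmeMap) : ℝ := ∫ x, energyDensity φ x

/-- det(φ, ∇φ)(x). -/
def detDen (φ : SkyrmeMap) (x : R3) : ℝ :=
  det4 (φ.toFun x) (φ.pderiv 0 x) (φ.pderiv 1 x) (φ.pderiv 2 x)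

/-- The topological degree d(φ) = (1/(2π²)) ∫ det(φ,∇φ). -/
def degree (φ : SkyrmeMap) : ℝ := (1 / (2 * π ^ 2)) * ∫ x, detDen φ x

/-- I_k = inf of the energy over maps of degree k. -/
def Skyrme.I (k : ℤ) : ℝ :=
  sInf {E : ℝ | ∃ φ : SkyrmeMap, memX φ ∧ degree φ = (k : ℝ) ∧ energy φ = E}

/-- The north pole P = (0,0,0,1) of S³. -/
def northPole : R4 := ![0, 0, 0, 1]

/-- The Euclidean ball B(y,r) in ℝ³. -/
def eball (y : R3) (r : ℝ) : Set R3 := {x | ∑ i, (x i - y i) ^ 2 < r ^ 2}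

open scoped Convolution

/-- Translation correlations of square integrable functions are continuous. -/
lemma continuous_corr {f g : R3 → ℝ} (hf : MemLp f 2 volume) (hg : MemLp g 2 volume) :
    Continuous (fun z : R3 => ∫ x, g x * f (z + x)) := by
  have : Fact ((2 : ℝ≥0∞) ≠ ∞) := ⟨by norm_num⟩
  have hc : Continuous (fun z : R3 => (DomAddAct.mk z : R3ᵈᵃᵃ) +ᵥ hf.toLp f) := by
    have h1 : Continuous (fun z : R3 => (DomAddAct.mk z : R3ᵈᵃᵃ)) := DomAddAct.continuous_mk
    exact h1.vadd continuous_const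
  have h2 : Continuous (fun z : R3 =>
      inner ℝ ((DomAddAct.mk z : R3ᵈᵃᵃ) +ᵥ hf.toLp f) (hg.toLp g)) := hc.inner continuous_const
  convert h2 using 2 with z
  rw [DomAddAct.mk_vadd_toLp, L2.inner_def]
  apply integral_congr_ae
  filter_upwards [hg.coeFn_toLp, (hf.comp_measurePreserving <|
    measurePreserving_vadd z (volume : Measure R3)).coeFn_toLp] with x h1 h2
  have h3 : (MemLp.toLp (fun x => f (z +ᵥ x)) (hf.comp_measurePreserving <|
    measurePreserving_vadd z (volume : Measure R3)) : R3 → ℝ) x = f (z + x) := h2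
  rw [h1, h3]
  simp

/-- Mollifications of `f` pair weakly with `g`. -/
lemma integral_mul_conv {f g ρ : R3 → ℝ} (hf : MemLp f 2 volume) (hg : MemLp g 2 volume)
    (hρ : Continuous ρ) (hρc : HasCompactSupport ρ) :
    ∫ x, g x * (ρ ⋆[ContinuousLinearMap.lsmul ℝ ℝ, volume] f) x =
      (ρ ⋆[ContinuousLinearMap.lsmul ℝ ℝ, volume] (fun z : R3 => ∫ x, g x * f (z + x))) 0 := by
  have hρi : Integrable ρ volume := hρ.integrable_of_hasCompactSupport hρc
  simp only [convolution_lsmul, smul_eq_mul, ← integral_const_mul, zero_sub]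
  rw [integral_integral_swap]
  · congr 1; ext y; congr 1; ext x
    rw [show x - y = -y + x by abel]; ring
  · have hm : AEStronglyMeasurable (Function.uncurry fun x y : R3 => g x * (ρ y * f (x - y)))
        (volume.prod volume) := by
      refine (hg.1.comp_fst).mul ?_
      exact AEStronglyMeasurable.convolution_integrand (ContinuousLinearMap.lsmul ℝ ℝ)
        hρ.aestronglyMeasurable hf.1
    have hmp : ∀ y : R3, MeasurePreserving (fun x : R3 => x - y) volume volume :=
      fun y => measurePreserving_sub_right volume y
    rw [integrable_prod_iff' hm]
    constructor
    · filter_upwards with y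
      have : MemLp (fun x => f (x - y)) 2 volume := hf.comp_measurePreserving (hmp y)
      have := (hg.integrable_mul this).const_mul (ρ y)
      refine this.congr (ae_of_all _ fun x => ?_)
      simp [Function.uncurry]; ring
    · have hc := continuous_corr hf.norm hg.norm
      have : Integrable (fun y => ‖ρ y‖ * ∫ x, ‖g x‖ * ‖f (-y + x)‖) volume := by
        apply Continuous.integrable_of_hasCompactSupport
        · exact hρ.norm.mul (hc.comp continuous_neg)
        · exact hρc.norm.mul_right
      refine this.congr (ae_of_all _ fun y => ?_)
      simp only [Function.uncurry, ← integral_const_mul, norm_mul]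
      congr 1; ext x
      rw [show x - y = -y + x by abel]; ring

/-- A sequence of bumps shrinking to the origin. -/
def bmp (n : ℕ) : ContDiffBump (0 : R3) where
  rIn := 1 / ((n : ℝ) + 1)
  rOut := 2 / ((n : ℝ) + 1)
  rIn_pos := by positivity
  rIn_lt_rOut := by
    have : (0 : ℝ) < (n : ℝ) + 1 := by positivity
    exact div_lt_div_of_pos_right (by norm_num) this

lemma bmp_rOut : Tendsto (fun n => (bmp n).rOut) atTop (𝓝 0) := by
  have := (tendsto_one_div_add_atTop_nhds_zero_nat (𝕜 := ℝ)).const_mul 2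
  simp only [mul_zero] at this
  refine this.congr fun n => ?_
  simp [bmp]; ring

/-- The mollification of `f` at scale `n`. -/
def moll (n : ℕ) (f : R3 → ℝ) : R3 → ℝ :=
  (bmp n).normed volume ⋆[ContinuousLinearMap.lsmul ℝ ℝ, volume] f

lemma moll_weak {f g : R3 → ℝ} (hf : MemLp f 2 volume) (hg : MemLp g 2 volume) :
    Tendsto (fun n => ∫ x, g x * moll n f x) atTop (𝓝 (∫ x, g x * f x)) := by
  have := ContDiffBump.convolution_tendsto_right_of_continuous (μ := (volume : Measure R3))
    bmp_rOut (continuous_corr hf hg) 0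
  simp only [zero_add] at this
  refine this.congr fun n => ?_
  rw [← integral_mul_conv hf hg (bmp n).continuous_normed (bmp n).hasCompactSupport_normed]
  rfl

lemma moll_ae {u : R3 → ℝ} (hu : LocallyIntegrable u volume) :
    ∀ᵐ x, Tendsto (fun n => moll n u x) atTop (𝓝 (u x)) := by
  refine ContDiffBump.ae_convolution_tendsto_right_of_locallyIntegrable (K := 2) bmp_rOut
    (Eventually.of_forall fun n => ?_) hu
  simp [bmp]; apply le_of_eq; ring

lemma moll_contDiff {u : R3 → ℝ} (hu : LocallyIntegrable u volume) (n : ℕ) :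
    ContDiff ℝ (⊤ : ℕ∞) (moll n u) :=
  HasCompactSupport.contDiff_convolution_left _ (bmp n).hasCompactSupport_normed
    (bmp n).contDiff_normed hu

lemma moll_bound {u : R3 → ℝ} (hb : ∀ᵐ x, |u x| ≤ 1) (n : ℕ) (x : R3) : |moll n u x| ≤ 1 := by
  rw [moll, convolution_lsmul_swap, ← Real.norm_eq_abs]
  have hi : Integrable (fun t => (bmp n).normed volume (x - t)) (volume : Measure R3) :=
    (bmp n).integrable_normed.comp_sub_left x
  refine (norm_integral_le_of_norm_le hi ?_).trans ?_
  · filter_upwards [hb] with t ht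
    rw [smul_eq_mul, norm_mul, Real.norm_of_nonneg ((bmp n).nonneg_normed _)]
    exact mul_le_of_le_one_right ((bmp n).nonneg_normed _) ht
  · rw [integral_sub_left_eq_self (fun t => (bmp n).normed (volume : Measure R3) t) volume x,
      (bmp n).integral_normed]

/-- `D` is the weak gradient of `u`. -/
def IsWG (u : R3 → ℝ) (D : Fin 3 → R3 → ℝ) : Prop :=
  ∀ (i : Fin 3) (ψ : R3 → ℝ), IsTestFun ψ →
    ∫ x : R3, fderiv ℝ ψ x (Pi.single i 1) * u x = - ∫ x : R3, ψ x * D i x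

/-- `F` is weakly divergence free. -/
def DivFree (F : Fin 3 → R3 → ℝ) : Prop :=
  ∀ (ψ : R3 → ℝ), IsTestFun ψ → ∑ i, ∫ x : R3, F i x * fderiv ℝ ψ x (Pi.single i 1) = 0

lemma moll_fderiv {u : R3 → ℝ} {D : Fin 3 → R3 → ℝ} (hu : LocallyIntegrable u volume)
    (hD : IsWG u D) (n : ℕ) (i : Fin 3) (x : R3) :
    fderiv ℝ (moll n u) x (Pi.single i 1) = moll n (D i) x := by
  set ρ : R3 → ℝ := (bmp n).normed volume with hρ
  have hρs : ContDiff ℝ (⊤ : ℕ∞) ρ := (bmp n).contDiff_normed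
  have hρc : HasCompactSupport ρ := (bmp n).hasCompactSupport_normed
  have hd := HasCompactSupport.hasFDerivAt_convolution_left (μ := (volume : Measure R3))
    (ContinuousLinearMap.lsmul ℝ ℝ) hρc
    (hρs.of_le (by exact_mod_cast le_top)) hu x
  have hd' : HasFDerivAt (moll n u) _ x := hd
  rw [hd'.fderiv, convolution_eq_swap, moll, convolution_lsmul_swap,
    ContinuousLinearMap.integral_apply]
  · have htest : IsTestFun (fun t => ρ (x - t)) :=
      ⟨hρs.comp (contDiff_const.sub contDiff_id),
        hρc.comp_homeomorph (Homeomorph.subLeft x)⟩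
    have := hD i _ htest
    have hfd : ∀ t, fderiv ℝ (fun t => ρ (x - t)) t (Pi.single i 1)
        = - fderiv ℝ ρ (x - t) (Pi.single i 1) := by
      intro t
      have h0 : HasFDerivAt (fun t => x - t) (-(ContinuousLinearMap.id ℝ R3)) t :=
        (hasFDerivAt_id t).const_sub x
      have h1 := ((hρs.differentiable (by simp)) (x - t)).hasFDerivAt.comp t h0
      have h2 := h1.fderiv
      simp only [Function.comp_def] at h2
      rw [h2]; simp
    simp only [hfd, neg_mul, integral_neg, neg_inj] at this
    simpa [ContinuousLinearMap.precompL_apply] using this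
  · have := (hρc.fderiv (𝕜 := ℝ)).convolutionExists_left (μ := (volume : Measure R3))
      ((ContinuousLinearMap.lsmul ℝ ℝ).precompL R3)
      (hρs.continuous_fderiv (by simp)) hu x
    exact this.integrable_swap

/-- The `i`-th partial derivative. -/
def pd (i : Fin 3) (f : R3 → ℝ) (x : R3) : ℝ := fderiv ℝ f x (Pi.single i 1)

lemma IsTestFun.pd {f : R3 → ℝ} (hf : IsTestFun f) (i : Fin 3) : IsTestFun (pd i f) := by
  refine ⟨?_, hf.2.fderiv_apply (𝕜 := ℝ) _⟩
  exact (hf.1.fderiv_right (m := ((⊤ : ℕ∞) : WithTop ℕ∞)) (by simp)).clm_apply contDiff_const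

lemma IsTestFun.mul {f g : R3 → ℝ} (hf : IsTestFun f) (hg : ContDiff ℝ (⊤ : ℕ∞) g) :
    IsTestFun (fun x => f x * g x) :=
  ⟨hf.1.mul hg, hf.2.mul_right⟩

lemma IsTestFun.sub {f g : R3 → ℝ} (hf : IsTestFun f) (hg : IsTestFun g) :
    IsTestFun (fun x => f x - g x) :=
  ⟨hf.1.sub hg.1, by
    have := hf.2.add hg.2.neg
    have h2 : (fun x => f x - g x) = f + -g := by ext x; simp [sub_eq_add_neg]
    rw [h2]; exact this⟩

lemma IsTestFun.memLp {f : R3 → ℝ} (hf : IsTestFun f) (p : ℝ≥0∞) : MemLp f p volume :=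
  hf.1.continuous.memLp_of_hasCompactSupport hf.2

lemma pd_mul {f g : R3 → ℝ} (hf : ContDiff ℝ (⊤ : ℕ∞) f) (hg : ContDiff ℝ (⊤ : ℕ∞) g)
    (i : Fin 3) (x : R3) :
    pd i (fun x => f x * g x) x = f x * pd i g x + g x * pd i f x := by
  have h1 := (hf.differentiable (by simp)) x
  have h2 := (hg.differentiable (by simp)) x
  rw [pd, fderiv_fun_mul h1 h2]
  simp [pd]

lemma pd_sub {f g : R3 → ℝ} (hf : ContDiff ℝ (⊤ : ℕ∞) f) (hg : ContDiff ℝ (⊤ : ℕ∞) g)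
    (i : Fin 3) (x : R3) :
    pd i (fun x => f x - g x) x = pd i f x - pd i g x := by
  have h1 := (hf.differentiable (by simp)) x
  have h2 := (hg.differentiable (by simp)) x
  rw [pd, fderiv_fun_sub h1 h2]
  simp [pd]

lemma pd_comm {f : R3 → ℝ} (hf : ContDiff ℝ (⊤ : ℕ∞) f) (i j : Fin 3) (x : R3) :
    pd i (pd j f) x = pd j (pd i f) x := by
  have hs : IsSymmSndFDerivAt ℝ f x := hf.contDiffAt.isSymmSndFDerivAt (by
    simp only [minSmoothness_of_isRCLikeNormedField]; exact WithTop.coe_le_coe.2 le_top)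
  have hd : DifferentiableAt ℝ (fderiv ℝ f) x :=
    (hf.fderiv_right (m := ((⊤ : ℕ∞) : WithTop ℕ∞)) (by simp)).differentiable (by simp) x
  have key : ∀ i j : Fin 3, pd i (pd j f) x
      = fderiv ℝ (fderiv ℝ f) x (Pi.single i 1) (Pi.single j 1) := by
    intro i j
    have : pd j f = fun y => fderiv ℝ f y (Pi.single j 1) := rfl
    rw [this, pd, fderiv_clm_apply hd (differentiableAt_const _)]
    simp
  rw [key, key]
  exact hs.eq _ _

lemma cutoff_identity {F D : Fin 3 → R3 → ℝ} {u χ : R3 → ℝ}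
    (hF : ∀ i, MemLp (F i) 2 volume) (hdiv : DivFree F)
    (hu : AEStronglyMeasurable u volume) (hb : ∀ᵐ x, |u x| ≤ 1)
    (hD : ∀ i, MemLp (D i) 2 volume) (hw : IsWG u D) (hχ : IsTestFun χ) :
    ∑ i, ((∫ x, (F i x * χ x) * D i x) + ∫ x, (F i x * pd i χ x) * u x) = 0 := by
  have hul : LocallyIntegrable u volume := by
    have : MemLp u ⊤ volume := memLp_top_of_bound hu 1 hb
    exact this.locallyIntegrable le_top
  have hzero : ∀ n : ℕ, ∑ i, ((∫ x, (F i x * χ x) * moll n (D i) x)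
      + ∫ x, (F i x * pd i χ x) * moll n u x) = 0 := by
    intro n
    have hm := moll_contDiff hul n
    rw [← hdiv _ (hχ.mul hm)]
    refine Finset.sum_congr rfl fun i _ => ?_
    have hmi : moll n (D i) = pd i (moll n u) := by
      ext x; exact (moll_fderiv hul hw n i x).symm
    have hcd : ContDiff ℝ (⊤ : ℕ∞) (pd i (moll n u)) :=
      (hm.fderiv_right (m := ((⊤ : ℕ∞) : WithTop ℕ∞)) (by simp)).clm_apply contDiff_const
    rw [← integral_add]
    · congr 1; ext x
      have := pd_mul hχ.1 hm i x
      rw [pd] at this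
      rw [this, hmi]; ring
    · have := (hF i).integrable_mul ((hχ.mul hcd).memLp 2)
      refine this.congr (ae_of_all _ fun x => ?_)
      simp [hmi]; ring
    · have := (hF i).integrable_mul (((hχ.pd i).mul hm).memLp 2)
      refine this.congr (ae_of_all _ fun x => ?_)
      simp; ring
  refine tendsto_nhds_unique (f := fun _ : ℕ => (0 : ℝ)) (l := atTop) ?_ tendsto_const_nhds
  refine Tendsto.congr hzero ?_
  refine tendsto_finsetSum _ fun i _ => Tendsto.add ?_ ?_
  · apply moll_weak (hD i)
    have := hχ.memLp ⊤
    exact this.mul (hF i)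
  · have hint : Integrable (fun x => F i x * pd i χ x) volume :=
      (hF i).integrable_mul ((hχ.pd i).memLp 2)
    refine tendsto_integral_of_dominated_convergence (fun x => ‖F i x * pd i χ x‖) ?_ hint.norm ?_ ?_
    · intro n
      exact hint.1.mul (moll_contDiff hul n).continuous.aestronglyMeasurable
    · intro n
      filter_upwards with x
      rw [norm_mul]
      exact mul_le_of_le_one_right (norm_nonneg _) (moll_bound hb n x)
    · filter_upwards [moll_ae hul] with x hx
      exact hx.const_mul _

/-- The basic cutoff. -/
def bigB : ContDiffBump (0 : R3) where
  rIn := 1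
  rOut := 2
  rIn_pos := by norm_num
  rIn_lt_rOut := by norm_num

/-- Rescaled cutoffs. -/
def cut (n : ℕ) (x : R3) : ℝ := bigB ((1 / ((n : ℝ) + 1)) • x)

lemma cut_test (n : ℕ) : IsTestFun (cut n) := by
  have hc : (1 / ((n : ℝ) + 1)) ≠ 0 := by positivity
  refine ⟨bigB.contDiff.comp (contDiff_const_smul _), ?_⟩
  exact bigB.hasCompactSupport.comp_smul hc

lemma cut_pd (n : ℕ) (i : Fin 3) (x : R3) :
    pd i (cut n) x = (1 / ((n : ℝ) + 1)) * pd i bigB ((1 / ((n : ℝ) + 1)) • x) := by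
  have h0 : HasFDerivAt (fun x : R3 => (1 / ((n : ℝ) + 1)) • x)
      ((1 / ((n : ℝ) + 1)) • ContinuousLinearMap.id ℝ R3) x :=
    (hasFDerivAt_id x).fun_const_smul _
  have hd : ContDiff ℝ (⊤ : ℕ∞) bigB := bigB.contDiff
  have h1 := ((hd.differentiable (by simp)) ((1 / ((n : ℝ) + 1)) • x)).hasFDerivAt.comp x h0
  have h2 : fderiv ℝ (cut n) x = _ := h1.fderiv
  rw [pd, h2]
  simp [pd]

lemma div_pairing {F D : Fin 3 → R3 → ℝ} {u : R3 → ℝ}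
    (hF : ∀ i, MemLp (F i) 2 volume) (hF1 : ∀ i, Integrable (F i) volume) (hdiv : DivFree F)
    (hu : AEStronglyMeasurable u volume) (hb : ∀ᵐ x, |u x| ≤ 1)
    (hD : ∀ i, MemLp (D i) 2 volume) (hw : IsWG u D) :
    ∑ i, ∫ x, F i x * D i x = 0 := by
  have hT : Tendsto (fun n : ℕ => 1 / ((n : ℝ) + 1)) atTop (𝓝 0) :=
    tendsto_one_div_add_atTop_nhds_zero_nat
  have hB : IsTestFun (bigB : R3 → ℝ) := ⟨bigB.contDiff, bigB.hasCompactSupport⟩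
  have hle : ∀ n : ℕ, 1 / ((n : ℝ) + 1) ≤ 1 := fun n => by
    rw [div_le_one (by positivity)]; linarith [(Nat.cast_nonneg n : (0 : ℝ) ≤ n)]
  refine tendsto_nhds_unique (f := fun _ : ℕ => (0 : ℝ)) (l := atTop) ?_ tendsto_const_nhds
  refine Tendsto.congr (fun n => cutoff_identity hF hdiv hu hb hD hw (cut_test n)) ?_
  refine tendsto_finsetSum _ fun i _ => ?_
  obtain ⟨K, hK⟩ := (hB.pd i).1.continuous.bounded_above_of_compact_support (hB.pd i).2
  have h1 : Tendsto (fun n => ∫ x, (F i x * cut n x) * D i x) atTop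
      (𝓝 (∫ x, F i x * D i x)) := by
    have hint : Integrable (fun x => F i x * D i x) volume := (hF i).integrable_mul (hD i)
    refine tendsto_integral_of_dominated_convergence (fun x => ‖F i x * D i x‖) ?_ hint.norm ?_ ?_
    · intro n
      exact ((hF i).1.mul (cut_test n).1.continuous.aestronglyMeasurable).mul (hD i).1
    · intro n
      filter_upwards with x
      have h2 : ‖cut n x‖ ≤ 1 := by
        rw [cut, Real.norm_of_nonneg (bigB.nonneg)]; exact bigB.le_one
      rw [norm_mul, norm_mul, norm_mul]
      gcongr
      exact mul_le_of_le_one_right (norm_nonneg _) h2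
    · filter_upwards with x
      have hx : Tendsto (fun n : ℕ => (1 / ((n : ℝ) + 1)) • x) atTop (𝓝 0) := by
        simpa using hT.smul_const x
      have h2 : Tendsto (fun n => cut n x) atTop (𝓝 1) := by
        have h3 := (bigB.continuous.tendsto (0 : R3)).comp hx
        have h4 : bigB (0 : R3) = 1 := bigB.one_of_mem_closedBall (Metric.mem_closedBall_self bigB.rIn_pos.le)
        rwa [h4] at h3
      simpa using (h2.const_mul (F i x)).mul_const (D i x)
  have h2 : Tendsto (fun n => ∫ x, (F i x * pd i (cut n) x) * u x) atTop
      (𝓝 (∫ x : R3, (0 : ℝ))) := by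
    refine tendsto_integral_of_dominated_convergence (fun x => ‖F i x‖ * K) ?_
      ((hF1 i).norm.mul_const K) ?_ ?_
    · intro n
      exact ((hF i).1.mul ((cut_test n).pd i).1.continuous.aestronglyMeasurable).mul hu
    · intro n
      filter_upwards [hb] with x hx
      have h3 : ‖pd i (cut n) x‖ ≤ K := by
        rw [cut_pd, norm_mul, Real.norm_of_nonneg (by positivity)]
        exact (mul_le_of_le_one_left (norm_nonneg _) (hle n)).trans (hK _)
      rw [norm_mul, norm_mul]
      exact (mul_le_of_le_one_right (by positivity) hx).trans (by gcongr)
    · filter_upwards with x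
      have h4 : Tendsto (fun n => pd i (cut n) x) atTop (𝓝 0) := by
        refine squeeze_zero_norm (a := fun n : ℕ => 1 / ((n : ℝ) + 1) * K) (fun n => ?_) ?_
        · rw [cut_pd, norm_mul, Real.norm_of_nonneg (by positivity)]
          gcongr
          exact hK _
        · simpa using hT.mul_const K
      simpa using (h4.const_mul (F i x)).mul_const (u x)
  simpa using h1.add h2

/-- Pointwise cross product. -/
def crs (a b : Fin 3 → R3 → ℝ) : Fin 3 → R3 → ℝ :=
  fun i x => a (i + 1) x * b (i + 2) x - a (i + 2) x * b (i + 1) x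

lemma divFree_test {v ψ : R3 → ℝ} {D : Fin 3 → R3 → ℝ} (hψ : IsTestFun ψ)
    (hv : AEStronglyMeasurable v volume) (hb : ∀ᵐ x, |v x| ≤ 1)
    (hD : ∀ i, MemLp (D i) 2 volume) (hw : IsWG v D) :
    DivFree (crs (fun i => pd i ψ) D) := by
  intro η hη
  set G : Fin 3 → R3 → ℝ := crs (fun i => pd i η) (fun i => pd i ψ) with hG
  have hGt : ∀ i, IsTestFun (G i) := fun i =>
    ((hη.pd _).mul (hψ.pd _).1).sub ((hη.pd _).mul (hψ.pd _).1)
  have hi1 : ∀ i, Integrable (fun x => G i x * D i x) volume := fun i =>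
    ((hGt i).memLp 2).integrable_mul (hD i)
  have hvm : MemLp v ⊤ volume := memLp_top_of_bound hv 1 hb
  have hi2 : ∀ i, Integrable (fun x => pd i (G i) x * v x) volume := fun i =>
    memLp_one_iff_integrable.1 (hvm.mul (((hGt i).pd i).memLp 1))
  have hi3 : ∀ i, Integrable (fun x => crs (fun i => pd i ψ) D i x * pd i η x) volume := by
    intro i
    have h1 := (((hψ.pd (i+1)).mul (hη.pd i).1).memLp 2).integrable_mul (hD (i+2))
    have h2 := (((hψ.pd (i+2)).mul (hη.pd i).1).memLp 2).integrable_mul (hD (i+1))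
    refine (h1.sub h2).congr (ae_of_all _ fun x => ?_)
    simp [crs]; ring
  change ∑ i, ∫ x, crs (fun i => pd i ψ) D i x * pd i η x = 0
  rw [← integral_finsetSum _ (fun i _ => hi3 i)]
  have e1 : ∀ x, ∑ i, crs (fun i => pd i ψ) D i x * pd i η x = ∑ i, G i x * D i x := by
    intro x
    simp only [hG, crs, Fin.sum_univ_three]
    simp only [show (0 + 1 : Fin 3) = 1 from rfl, show (0 + 2 : Fin 3) = 2 from rfl,
      show (1 + 1 : Fin 3) = 2 from rfl, show (1 + 2 : Fin 3) = 0 from rfl,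
      show (2 + 1 : Fin 3) = 0 from rfl, show (2 + 2 : Fin 3) = 1 from rfl]
    ring
  simp_rw [e1]
  rw [integral_finsetSum _ (fun i _ => hi1 i)]
  have e2 : ∀ i, ∫ x, G i x * D i x = - ∫ x, pd i (G i) x * v x := by
    intro i
    have := hw i _ (hGt i)
    simp only [pd]
    linarith
  simp_rw [e2]
  rw [Finset.sum_neg_distrib, ← integral_finsetSum _ (fun i _ => hi2 i)]
  have e3 : ∀ x, ∑ i, pd i (G i) x * v x = 0 := by
    intro x
    have hp : ∀ i j k, pd i (fun x => pd j η x * pd k ψ x) x =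
        pd j η x * pd i (pd k ψ) x + pd k ψ x * pd i (pd j η) x :=
      fun i j k => pd_mul (hη.pd j).1 (hψ.pd k).1 i x
    have hq : ∀ i, pd i (G i) x = pd i (fun x => pd (i+1) η x * pd (i+2) ψ x) x
        - pd i (fun x => pd (i+2) η x * pd (i+1) ψ x) x := fun i =>
      pd_sub ((hη.pd _).mul (hψ.pd _).1).1 ((hη.pd _).mul (hψ.pd _).1).1 i x
    simp only [hq, hp, Fin.sum_univ_three]
    simp only [show (0 + 1 : Fin 3) = 1 from rfl, show (0 + 2 : Fin 3) = 2 from rfl,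
      show (1 + 1 : Fin 3) = 2 from rfl, show (1 + 2 : Fin 3) = 0 from rfl,
      show (2 + 1 : Fin 3) = 0 from rfl, show (2 + 2 : Fin 3) = 1 from rfl]
    rw [pd_comm hη.1 1 0, pd_comm hη.1 2 0, pd_comm hη.1 2 1,
      pd_comm hψ.1 1 0, pd_comm hψ.1 2 0, pd_comm hψ.1 2 1]
    ring
  simp [e3]

lemma divFree_crs {u v : R3 → ℝ} {D E : Fin 3 → R3 → ℝ}
    (hu : AEStronglyMeasurable u volume) (hub : ∀ᵐ x, |u x| ≤ 1)
    (hD : ∀ i, MemLp (D i) 2 volume) (hwu : IsWG u D)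
    (hv : AEStronglyMeasurable v volume) (hvb : ∀ᵐ x, |v x| ≤ 1)
    (hE : ∀ i, MemLp (E i) 2 volume) (hwv : IsWG v E) :
    DivFree (crs D E) := by
  intro ψ hψ
  set F := crs (fun i => pd i ψ) E with hF
  have hF2 : ∀ i, MemLp (F i) 2 volume := fun i =>
    ((hE (i+2)).mul ((hψ.pd (i+1)).memLp ⊤)).sub ((hE (i+1)).mul ((hψ.pd (i+2)).memLp ⊤))
  have hF1 : ∀ i, Integrable (F i) volume := fun i =>
    (((hψ.pd (i+1)).memLp 2).integrable_mul (hE (i+2))).sub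
      (((hψ.pd (i+2)).memLp 2).integrable_mul (hE (i+1)))
  have key := div_pairing hF2 hF1 (divFree_test hψ hv hvb hE hwv) hu hub hD hwu
  have hi1 : ∀ i, Integrable (fun x => F i x * D i x) volume := fun i =>
    (hF2 i).integrable_mul (hD i)
  have hi2 : ∀ i, Integrable (fun x => crs D E i x * pd i ψ x) volume := by
    intro i
    have h1 := ((hD (i+1)).mul ((hψ.pd i).memLp ⊤) (r := 2)).integrable_mul (hE (i+2))
    have h2 := ((hD (i+2)).mul ((hψ.pd i).memLp ⊤) (r := 2)).integrable_mul (hE (i+1))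
    refine (h1.sub h2).congr (ae_of_all _ fun x => ?_)
    simp [crs]; ring
  change ∑ i, ∫ x, crs D E i x * pd i ψ x = 0
  rw [← integral_finsetSum _ (fun i _ => hi1 i)] at key
  rw [← integral_finsetSum _ (fun i _ => hi2 i), ← neg_eq_zero, ← integral_neg, ← key]
  congr 1; ext x
  simp only [hF, crs, Fin.sum_univ_three]
  simp only [show (0 + 1 : Fin 3) = 1 from rfl, show (0 + 2 : Fin 3) = 2 from rfl,
    show (1 + 1 : Fin 3) = 2 from rfl, show (1 + 2 : Fin 3) = 0 from rfl,
    show (2 + 1 : Fin 3) = 0 from rfl, show (2 + 2 : Fin 3) = 1 from rfl]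
  ring

lemma det4_expand (p a b c : R4) :
    det4 p a b c = p 0 * (a 1 * (b 2 * c 3 - b 3 * c 2) - b 1 * (a 2 * c 3 - a 3 * c 2)
        + c 1 * (a 2 * b 3 - a 3 * b 2))
      - p 1 * (a 0 * (b 2 * c 3 - b 3 * c 2) - b 0 * (a 2 * c 3 - a 3 * c 2)
        + c 0 * (a 2 * b 3 - a 3 * b 2))
      + p 2 * (a 0 * (b 1 * c 3 - b 3 * c 1) - b 0 * (a 1 * c 3 - a 3 * c 1)
        + c 0 * (a 1 * b 3 - a 3 * b 1))
      - p 3 * (a 0 * (b 1 * c 2 - b 2 * c 1) - b 0 * (a 1 * c 2 - a 2 * c 1)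
        + c 0 * (a 1 * b 2 - a 2 * b 1)) := by
  simp [det4, Matrix.det_succ_column_zero, Fin.sum_univ_succ, Fin.succAbove]
  ring

lemma sq_le_nsq (u : R4) (a : Fin 4) : u a ^ 2 ≤ nsq u := by
  rw [nsq, dot, sq]
  exact Finset.single_le_sum (f := fun a => u a * u a) (fun i _ => mul_self_nonneg _)
    (Finset.mem_univ a)

lemma wedge_minor (u v : R4) : (u 1 * v 2 - v 1 * u 2) ^ 2 ≤ wedgeSq u v := by
  simp only [wedgeSq, nsq, dot, Fin.sum_univ_four]
  nlinarith [sq_nonneg (u 0 * v 1 - u 1 * v 0), sq_nonneg (u 0 * v 2 - u 2 * v 0),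
    sq_nonneg (u 0 * v 3 - u 3 * v 0), sq_nonneg (u 1 * v 3 - u 3 * v 1),
    sq_nonneg (u 2 * v 3 - u 3 * v 2)]

lemma wedgeSq_nonneg (u v : R4) : 0 ≤ wedgeSq u v := (sq_nonneg _).trans (wedge_minor u v)

lemma nsq_nonneg (u : R4) : 0 ≤ nsq u := (sq_nonneg _).trans (sq_le_nsq u 0)

lemma nsq_le_energy (φ : SkyrmeMap) (i : Fin 3) (x : R3) :
    nsq (φ.pderiv i x) ≤ energyDensity φ x := by
  have h1 : nsq (φ.pderiv i x) ≤ gradSq φ x :=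
    Finset.single_le_sum (f := fun i => nsq (φ.pderiv i x)) (fun i _ => nsq_nonneg _)
      (Finset.mem_univ i)
  have h2 : 0 ≤ ASq φ x :=
    Finset.sum_nonneg fun i _ => Finset.sum_nonneg fun j _ => wedgeSq_nonneg _ _
  rw [energyDensity]; linarith

lemma wedge_le_energy (φ : SkyrmeMap) (i j : Fin 3) (x : R3) :
    wedgeSq (φ.pderiv i x) (φ.pderiv j x) ≤ energyDensity φ x := by
  have h1 : 0 ≤ gradSq φ x := Finset.sum_nonneg fun i _ => nsq_nonneg _
  have h2 : wedgeSq (φ.pderiv i x) (φ.pderiv j x) ≤ ∑ j, wedgeSq (φ.pderiv i x) (φ.pderiv j x) :=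
    Finset.single_le_sum (f := fun j => wedgeSq (φ.pderiv i x) (φ.pderiv j x))
      (fun i _ => wedgeSq_nonneg _ _) (Finset.mem_univ j)
  have h3 : ∑ j, wedgeSq (φ.pderiv i x) (φ.pderiv j x) ≤ ASq φ x :=
    Finset.single_le_sum (f := fun i => ∑ j, wedgeSq (φ.pderiv i x) (φ.pderiv j x))
      (fun i _ => Finset.sum_nonneg fun j _ => wedgeSq_nonneg _ _) (Finset.mem_univ i)
  rw [energyDensity]; linarith

lemma memLp_of_sq_le {f e : R3 → ℝ} (hf : AEStronglyMeasurable f volume)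
    (he : Integrable e volume) (h : ∀ x, f x ^ 2 ≤ e x) : MemLp f 2 volume := by
  rw [memLp_two_iff_integrable_sq hf]
  refine he.mono' (hf.pow 2) (ae_of_all _ fun x => ?_)
  rw [Real.norm_of_nonneg (sq_nonneg _)]; exact h x

/-- Gradient of the component `a`. -/
def gr (φ : SkyrmeMap) (a : Fin 4) : Fin 3 → R3 → ℝ := fun i x => φ.pderiv i x a

lemma gr_meas (φ : SkyrmeMap) (a : Fin 4) (i : Fin 3) :
    AEStronglyMeasurable (gr φ a i) volume :=
  (continuous_apply a).comp_aestronglyMeasurable (φ.pderiv_locInt i).aestronglyMeasurable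

lemma northPole_integral (φ : SkyrmeMap) (hφ : memX φ) :
    Integrable (fun x => det4 northPole (φ.pderiv 0 x) (φ.pderiv 1 x) (φ.pderiv 2 x)) volume ∧
    (∫ x, det4 northPole (φ.pderiv 0 x) (φ.pderiv 1 x) (φ.pderiv 2 x)) = 0 := by
  have hu : ∀ a, AEStronglyMeasurable (fun x => φ.toFun x a) volume := fun a =>
    ((measurable_pi_apply a).comp φ.meas).aestronglyMeasurable
  have hb : ∀ a, ∀ᵐ x, |φ.toFun x a| ≤ 1 := fun a => by
    filter_upwards [φ.sphere] with x hx
    rw [← sq_le_one_iff_abs_le_one, ← hx]; exact sq_le_nsq _ a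
  have hD : ∀ a i, MemLp (gr φ a i) 2 volume := fun a i =>
    memLp_of_sq_le (gr_meas φ a i) hφ fun x => (sq_le_nsq _ a).trans (nsq_le_energy φ i x)
  have hw : ∀ a, IsWG (fun x => φ.toFun x a) (gr φ a) := fun a i ψ hψ => φ.weak i a ψ hψ
  have hC2 : ∀ i, MemLp (crs (gr φ 1) (gr φ 2) i) 2 volume := fun i => by
    refine memLp_of_sq_le ?_ hφ fun x =>
      (wedge_minor _ _).trans (wedge_le_energy φ (i+1) (i+2) x)
    exact ((gr_meas φ 1 _).mul (gr_meas φ 2 _)).sub ((gr_meas φ 1 _).mul (gr_meas φ 2 _))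
  have hC1 : ∀ i, Integrable (crs (gr φ 1) (gr φ 2) i) volume := fun i =>
    ((hD 1 _).integrable_mul (hD 2 _)).sub ((hD 1 _).integrable_mul (hD 2 _))
  have key := div_pairing hC2 hC1
    (divFree_crs (hu 1) (hb 1) (hD 1) (hw 1) (hu 2) (hb 2) (hD 2) (hw 2)) (hu 0) (hb 0) (hD 0) (hw 0)
  have hi : ∀ i, Integrable (fun x => crs (gr φ 1) (gr φ 2) i x * gr φ 0 i x) volume :=
    fun i => (hC2 i).integrable_mul (hD 0 i)
  rw [← integral_finsetSum _ (fun i _ => hi i)] at key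
  have e : ∀ x, det4 northPole (φ.pderiv 0 x) (φ.pderiv 1 x) (φ.pderiv 2 x)
      = - ∑ i, crs (gr φ 1) (gr φ 2) i x * gr φ 0 i x := by
    intro x
    rw [det4_expand]
    simp only [crs, gr, Fin.sum_univ_three, show (0 + 1 : Fin 3) = 1 from rfl,
      show (0 + 2 : Fin 3) = 2 from rfl,
      show (1 + 1 : Fin 3) = 2 from rfl, show (1 + 2 : Fin 3) = 0 from rfl,
      show (2 + 1 : Fin 3) = 0 from rfl, show (2 + 2 : Fin 3) = 1 from rfl,
      show northPole 0 = 0 from rfl, show northPole 1 = 0 from rfl,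
      show northPole 2 = 0 from rfl, show northPole 3 = 1 from rfl]
    ring
  simp_rw [e]
  refine ⟨(integrable_finsetSum _ fun i _ => hi i).neg, ?_⟩
  rw [integral_neg, key, neg_zero]

/-- ∫ det(P,∇φ) = 0 and consequently
∫ det(φ−P,∇φ) = ∫ det(φ,∇φ) = 2π² d(φ). -/
theorem skyrme_north_pole_det (φ : SkyrmeMap) (hφ : memX φ) :
    (∫ x, det4 northPole (φ.pderiv 0 x) (φ.pderiv 1 x) (φ.pderiv 2 x)) = 0 ∧
    (∫ x, det4 (φ.toFun x - northPole) (φ.pderiv 0 x) (φ.pderiv 1 x) (φ.pderiv 2 x))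
      = ∫ x, detDen φ x ∧
    (∫ x, detDen φ x) = 2 * π ^ 2 * degree φ := by
  obtain ⟨hi, h0⟩ := northPole_integral φ hφ
  refine ⟨h0, ?_, ?_⟩
  · have e : ∀ x, det4 (φ.toFun x - northPole) (φ.pderiv 0 x) (φ.pderiv 1 x) (φ.pderiv 2 x)
        = detDen φ x - det4 northPole (φ.pderiv 0 x) (φ.pderiv 1 x) (φ.pderiv 2 x) := by
      intro x
      rw [detDen, det4_expand, det4_expand, det4_expand]
      simp only [Pi.sub_apply]
      ring
    simp_rw [e]
    by_cases hd : Integrable (detDen φ) volume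
    · rw [integral_sub hd hi, h0, sub_zero]
    · rw [integral_undef hd, integral_undef]
      intro h
      refine hd ((h.add hi).congr (ae_of_all _ fun x => ?_))
      simp
  · rw [degree]
    field_simp
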